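/- arXiv:cs/0409015 — 2 statements merged into one kernel-verified Lean document; each statement's English description precedes it below -/
import Mathlib

section
/- Let p and q be distinct odd primes, let n = p·q, and let x, y : ZMod n satisfy y² = x². If the image of x − y in ZMod p is 0 but the image of x − y in ZMod q is nonzero, then Nat.gcd ((x − y).val) n = p. -/
/-- If `y² = x²` modulo `n = p·q`, and `x − y ≡ 0 (mod p)` but `x − y ≢ 0 (mod q)`,
then `gcd(x − y, n) = p`. -/
theorem gcd_recovers_factor (p q : ℕ) (hp : p.Prime) (hq : q.Prime) (hpq : p ≠ q)
    (hpodd : Odd p) (hqodd : Odd q) (n : ℕ) (hn : n = p * q)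
    (x y : ZMod n) (hsq : y ^ 2 = x ^ 2)
    (h1 : ZMod.castHom (show p ∣ n from hn ▸ dvd_mul_right p q) (ZMod p) (x - y) = 0)
    (h2 : ZMod.castHom (show q ∣ n from hn ▸ dvd_mul_left q p) (ZMod q) (x - y) ≠ 0) :
    Nat.gcd (x - y).val n = p := by
  have hn0 : NeZero n := ⟨by rw [hn]; exact Nat.mul_ne_zero hp.ne_zero hq.ne_zero⟩
  generalize x - y = z at h1 h2 ⊢
  rw [ZMod.castHom_apply, ZMod.cast_eq_val, ZMod.natCast_eq_zero_iff] at h1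
  rw [ZMod.castHom_apply, ZMod.cast_eq_val, Ne, ZMod.natCast_eq_zero_iff] at h2
  have hc : Nat.Coprime z.val q := ((Nat.Prime.coprime_iff_not_dvd hq).2 h2).symm
  have h3 : Nat.gcd z.val n = Nat.gcd z.val (p * q) := congrArg _ hn
  rw [h3, Nat.Coprime.gcd_mul_right_cancel_right p hc.symm]
  exact Nat.gcd_eq_right h1
end

section
/- Let p and q be distinct odd primes, let n = p·q, and let x be a unit of ZMod n. Then the set { y : ZMod n | y² = x² and 1 < Nat.gcd ((x − y).val) n and Nat.gcd ((x − y).val) n < n } has exactly two elements; moreover for one of these two elements the gcd equals p and for the other it equals q. -/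
theorem aux_gcd (p n : ℕ) (hp : p.Prime) (h : p ∣ n) [NeZero n] (z : ZMod n) :
    Nat.gcd z.val p = if ZMod.castHom h (ZMod p) z = 0 then p else 1 := by
  have e : ZMod.castHom h (ZMod p) z = ((z.val : ℕ) : ZMod p) := by
    rw [ZMod.castHom_apply, ZMod.natCast_val]
  split_ifs with hd <;> rw [e, ZMod.natCast_eq_zero_iff] at hd
  · exact Nat.gcd_eq_right hd
  · exact ((Nat.Prime.coprime_iff_not_dvd hp).2 hd).symm

theorem aux_neg (p : ℕ) (hp : p.Prime) (ho : Odd p) (a : ZMod p) (ha : a ≠ 0) : a - -a ≠ 0 := by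
  have := Fact.mk hp
  have h2 : (2 : ZMod p) ≠ 0 := by
    intro h
    have h' : ((2 : ℕ) : ZMod p) = 0 := by exact_mod_cast h
    rw [ZMod.natCast_eq_zero_iff] at h'
    have := (Nat.prime_dvd_prime_iff_eq hp Nat.prime_two).1 h'
    subst this
    exact absurd ho (by decide)
  rw [sub_neg_eq_add, ← two_mul]
  exact mul_ne_zero h2 ha

/-- Among the square roots `y` of `x²` modulo `n = p·q` (with `x` a unit),
exactly two yield a proper factor `gcd(x − y, n)` of `n`; for one of them the
gcd is `p` and for the other it is `q`. -/
theorem two_roots_give_factors (p q : ℕ) (hp : p.Prime) (hq : q.Prime) (hpq : p ≠ q)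
    (hpodd : Odd p) (hqodd : Odd q) (n : ℕ) (hn : n = p * q)
    (x : ZMod n) (hx : IsUnit x) :
    Set.ncard {y : ZMod n | y ^ 2 = x ^ 2 ∧ 1 < Nat.gcd (x - y).val n ∧
        Nat.gcd (x - y).val n < n} = 2 ∧
      ∃ y₁ ∈ {y : ZMod n | y ^ 2 = x ^ 2 ∧ 1 < Nat.gcd (x - y).val n ∧
          Nat.gcd (x - y).val n < n},
        ∃ y₂ ∈ {y : ZMod n | y ^ 2 = x ^ 2 ∧ 1 < Nat.gcd (x - y).val n ∧
            Nat.gcd (x - y).val n < n},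
          y₁ ≠ y₂ ∧ Nat.gcd (x - y₁).val n = p ∧ Nat.gcd (x - y₂).val n = q := by
  subst hn
  have := Fact.mk hp
  have := Fact.mk hq
  have hc : Nat.Coprime p q := (Nat.coprime_primes hp hq).2 hpq
  have : NeZero (p * q) := ⟨mul_ne_zero hp.ne_zero hq.ne_zero⟩
  have hp1 := hp.one_lt
  have hq1 := hq.one_lt
  obtain ⟨f, hf⟩ : ∃ f, f = ZMod.castHom (Dvd.intro q rfl : p ∣ p * q) (ZMod p) := ⟨_, rfl⟩
  obtain ⟨g, hg⟩ : ∃ g, g = ZMod.castHom (Dvd.intro_left p rfl : q ∣ p * q) (ZMod q) := ⟨_, rfl⟩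
  have hgcd : ∀ z : ZMod (p * q), Nat.gcd z.val (p * q) =
      (if f z = 0 then p else 1) * (if g z = 0 then q else 1) := by
    intro z
    rw [Nat.Coprime.gcd_mul _ hc, hf, hg, ← aux_gcd p _ hp, ← aux_gcd q _ hq]
  let e := ZMod.chineseRemainder hc
  have he1 : ∀ z, (e z).1 = f z := fun z =>
    congrArg (fun h : ZMod (p * q) →+* ZMod p => h z)
      (Subsingleton.elim ((RingHom.fst _ _).comp e.toRingHom) f)
  have he2 : ∀ z, (e z).2 = g z := fun z =>
    congrArg (fun h : ZMod (p * q) →+* ZMod q => h z)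
      (Subsingleton.elim ((RingHom.snd _ _).comp e.toRingHom) g)
  have inj : ∀ y z, f y = f z → g y = g z → y = z := by
    intro y z h1 h2
    apply e.injective
    ext
    · rw [he1, he1, h1]
    · rw [he2, he2, h2]
  have surj : ∀ a b, ∃ y, f y = a ∧ g y = b := by
    intro a b
    refine ⟨e.symm (a, b), ?_, ?_⟩
    · rw [← he1, e.apply_symm_apply]
    · rw [← he2, e.apply_symm_apply]
  have fx : f x ≠ 0 := (hx.map f).ne_zero
  have gx : g x ≠ 0 := (hx.map g).ne_zero
  have fn := aux_neg p hp hpodd _ fx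
  have gn := aux_neg q hq hqodd _ gx
  obtain ⟨y₁, a1, b1⟩ := surj (f x) (-g x)
  obtain ⟨y₂, a2, b2⟩ := surj (-f x) (g x)
  have g1 : Nat.gcd (x - y₁).val (p * q) = p := by
    rw [hgcd, map_sub, map_sub, a1, b1, if_pos (sub_self _), if_neg gn, mul_one]
  have g2 : Nat.gcd (x - y₂).val (p * q) = q := by
    rw [hgcd, map_sub, map_sub, a2, b2, if_pos (sub_self _), if_neg fn, one_mul]
  have m1 : y₁ ^ 2 = x ^ 2 ∧ 1 < Nat.gcd (x - y₁).val (p * q) ∧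
      Nat.gcd (x - y₁).val (p * q) < p * q := by
    refine ⟨inj _ _ (by simp [a1]) (by simp [b1]), ?_, ?_⟩ <;> rw [g1]
    · exact hp1
    · nlinarith
  have m2 : y₂ ^ 2 = x ^ 2 ∧ 1 < Nat.gcd (x - y₂).val (p * q) ∧
      Nat.gcd (x - y₂).val (p * q) < p * q := by
    refine ⟨inj _ _ (by simp [a2]) (by simp [b2]), ?_, ?_⟩ <;> rw [g2]
    · exact hq1
    · nlinarith
  have hne : y₁ ≠ y₂ := by
    rintro rfl
    exact hpq (g1.symm.trans g2)
  refine ⟨?_, y₁, m1, y₂, m2, hne, g1, g2⟩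
  refine Eq.trans (congrArg Set.ncard ?_) (Set.ncard_pair hne)
  ext y
  simp only [Set.mem_ofPred_eq, Set.mem_insert_iff, Set.mem_singleton_iff]
  constructor
  · rintro ⟨hy, h1, h2⟩
    have hfy : f y = f x ∨ f y = -f x := sq_eq_sq_iff_eq_or_eq_neg.1 (by rw [← map_pow, hy, map_pow])
    have hgy : g y = g x ∨ g y = -g x := sq_eq_sq_iff_eq_or_eq_neg.1 (by rw [← map_pow, hy, map_pow])
    rw [hgcd, map_sub, map_sub] at h1 h2
    rcases hfy with u | u <;> rcases hgy with v | v
    · rw [u, v, if_pos (sub_self _), if_pos (sub_self _)] at h2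
      exact absurd h2 (lt_irrefl _)
    · exact Or.inl (inj _ _ (u.trans a1.symm) (v.trans b1.symm))
    · exact Or.inr (inj _ _ (u.trans a2.symm) (v.trans b2.symm))
    · rw [u, v, if_neg fn, if_neg gn] at h1
      exact absurd h1 (lt_irrefl _)
  · rintro (rfl | rfl)
    · exact m1
    · exact m2
end
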